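/- Let I ⊆ ℝ be an open interval, γ ≠ 0, k ∈ ℝ, β, δ ∈ ℝ, and let a : I → (0,∞) be differentiable with a′(p) = −γ/a(p) for all p ∈ I. Define z : I → ℝ by z(p) := (2γ/a(p))·(β·e^{−k·a(p)/γ} + δ·e^{k·a(p)/γ}). Then z is differentiable on I and the function p ↦ a(p)³·z′(p) is differentiable on I with derivative k²·a·z. -/

import Mathlib

open Set

/-!
Use `t = a p` as the independent variable, so that `d/dp = -(γ/t) d/dt`. For `z = c f(t)/t` this
gives `a³ z' = -c γ (t f'(t) - f(t))`. Since `(t f' - f)' = t f''`, a second differentiation turns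
`(a³ z')' = k² a z` into the constant-coefficient equation `γ² f'' = k² f`, whose solutions are
spanned by `exp (± k t / γ)` when `γ` and `k` are nonzero.
-/

section ChangeOfVariable

variable {𝕜 : Type*} [NontriviallyNormedField 𝕜] {a f f' : 𝕜 → 𝕜} {b d γ p t : 𝕜}

theorem hasDerivAt_const_div_mul_comp (c : 𝕜) (ha : HasDerivAt a (-γ / a p) p) (ha₀ : a p ≠ 0)
    (hf : HasDerivAt f d (a p)) :
    HasDerivAt (fun q => c / a q * f (a q)) (-(c * γ) * (a p * d - f (a p)) / a p ^ 3) p := by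
  refine (((hasDerivAt_const p c).fun_div ha ha₀).fun_mul (hf.comp p ha)).congr_deriv ?_
  simp only [Function.comp_apply]
  field_simp
  ring

theorem hasDerivAt_id_mul_deriv_sub (hf : HasDerivAt f (f' t) t) (hf' : HasDerivAt f' b t) :
    HasDerivAt (fun u => u * f' u - f u) (t * b) t :=
  (((hasDerivAt_id' t).fun_mul hf').fun_sub hf).congr_deriv (by ring)

theorem hasDerivAt_comp_mul_deriv_sub (ha : HasDerivAt a (-γ / a p) p) (ha₀ : a p ≠ 0)
    (hf : HasDerivAt f (f' (a p)) (a p)) (hf' : HasDerivAt f' b (a p)) :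
    HasDerivAt (fun q => a q * f' (a q) - f (a q)) (-γ * b) p :=
  ((hasDerivAt_id_mul_deriv_sub hf hf').comp p ha).congr_deriv (by field_simp)

end ChangeOfVariable

theorem stmt_17_general {𝕜 : Type*} [NontriviallyNormedField 𝕜] {s : Set 𝕜} (hs : IsOpen s)
    {a f f' f'' : 𝕜 → 𝕜} {γ k : 𝕜} (c : 𝕜)
    (ha : ∀ p ∈ s, HasDerivAt a (-γ / a p) p) (ha₀ : ∀ p ∈ s, a p ≠ 0)
    (hf : ∀ p ∈ s, HasDerivAt f (f' (a p)) (a p))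
    (hf' : ∀ p ∈ s, HasDerivAt f' (f'' (a p)) (a p))
    (hode : ∀ p ∈ s, γ ^ 2 * f'' (a p) = k ^ 2 * f (a p)) :
    ∃ z' : 𝕜 → 𝕜,
      (∀ p ∈ s, HasDerivAt (fun q => c / a q * f (a q)) (z' p) p) ∧
      ∀ p ∈ s, HasDerivAt (fun q => a q ^ 3 * z' q) (k ^ 2 * a p * (c / a p * f (a p))) p := by
  refine ⟨fun q => -(c * γ) * (a q * f' (a q) - f (a q)) / a q ^ 3,
    fun p hp => hasDerivAt_const_div_mul_comp c (ha p hp) (ha₀ p hp) (hf p hp), fun p hp => ?_⟩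
  have hflux : HasDerivAt (fun q => -(c * γ) * (a q * f' (a q) - f (a q)))
      (-(c * γ) * (-γ * f'' (a p))) p :=
    (hasDerivAt_comp_mul_deriv_sub (ha p hp) (ha₀ p hp) (hf p hp) (hf' p hp)).const_mul _
  have hvalue : -(c * γ) * (-γ * f'' (a p)) = k ^ 2 * a p * (c / a p * f (a p)) := by
    have hap := ha₀ p hp
    calc -(c * γ) * (-γ * f'' (a p)) = c * (γ ^ 2 * f'' (a p)) := by ring
      _ = c * (k ^ 2 * f (a p)) := by rw [hode p hp]
      _ = k ^ 2 * a p * (c / a p * f (a p)) := by field_simp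
  refine (hflux.congr_deriv hvalue).congr_of_eventuallyEq ?_
  filter_upwards [hs.mem_nhds hp] with q hq
  exact mul_div_cancel₀ _ (pow_ne_zero 3 (ha₀ q hq))

/-- The combination `β e^{-kt/γ} + δ e^{kt/γ}` of the two exponential solutions of `γ² f'' = k² f`,
parametrized by `k` and `γ` rather than by `k / γ`. -/
noncomputable def expCombination (k γ β δ t : ℝ) : ℝ :=
  β * Real.exp (-k * t / γ) + δ * Real.exp (k * t / γ)

theorem hasDerivAt_expCombination (k γ β δ t : ℝ) :
    HasDerivAt (expCombination k γ β δ) (k / γ * expCombination k γ (-β) δ t) t := by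
  have hexp (m : ℝ) :
      HasDerivAt (fun u => Real.exp (m * u / γ)) (Real.exp (m * t / γ) * (m / γ)) t :=
    ((hasDerivAt_const_mul m).div_const γ).exp
  refine (((hexp (-k)).const_mul β).fun_add ((hexp k).const_mul δ)).congr_deriv ?_
  rw [expCombination]
  ring

theorem hasDerivAt_deriv_expCombination (k γ β δ t : ℝ) :
    HasDerivAt (fun u => k / γ * expCombination k γ (-β) δ u)
      ((k / γ) ^ 2 * expCombination k γ β δ t) t :=
  ((hasDerivAt_expCombination k γ (-β) δ t).const_mul (k / γ)).congr_deriv (by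
    rw [neg_neg]; ring)

/-- On an open interval `I = (x,y)`, if `a > 0` is differentiable with
`a′ = −γ/a`, then `z(p) := (2γ/a(p))·(β e^{−k a(p)/γ} + δ e^{k a(p)/γ})` is differentiable
on `I` and `p ↦ a(p)³ z′(p)` is differentiable on `I` with derivative `k² a z`. -/
theorem stmt_17 (x y γ k β δ : ℝ) (hγ : γ ≠ 0)
    (a : ℝ → ℝ) (ha : ∀ p ∈ Set.Ioo x y, HasDerivAt a (-γ / a p) p)
    (hapos : ∀ p ∈ Set.Ioo x y, 0 < a p) :
    ∃ z' : ℝ → ℝ,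
      (∀ p ∈ Set.Ioo x y,
        HasDerivAt
          (fun s => 2 * γ / a s * (β * Real.exp (-k * a s / γ) + δ * Real.exp (k * a s / γ)))
          (z' p) p) ∧
      (∀ p ∈ Set.Ioo x y,
        HasDerivAt (fun s => a s ^ 3 * z' s)
          (k ^ 2 * a p
            * (2 * γ / a p * (β * Real.exp (-k * a p / γ) + δ * Real.exp (k * a p / γ)))) p) := by
  have hode (t : ℝ) :
      γ ^ 2 * ((k / γ) ^ 2 * expCombination k γ β δ t) = k ^ 2 * expCombination k γ β δ t := by
    field_simp
  exact stmt_17_general (f'' := fun t => (k / γ) ^ 2 * expCombination k γ β δ t)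
    isOpen_Ioo (2 * γ) ha (fun p hp => (hapos p hp).ne')
    (fun p _ => hasDerivAt_expCombination k γ β δ (a p))
    (fun p _ => hasDerivAt_deriv_expCombination k γ β δ (a p)) (fun p _ => hode (a p))
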